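/- arXiv:1909.00313 — 2 statements merged into one kernel-verified Lean document; each statement's English description precedes it below -/
import Mathlib

section
/- For every strict partition λ all of whose parts are at most n, the weight wt(λ) = Λ₁ − Σ_{(i,j)∈λ} α_{res(i,j)} belongs to the orbit W·Λ₁ of Λ₁ under the Weyl group W of type B_n. -/
/-- The fundamental weight Λ₁ = (1/2, …, 1/2) of type Bₙ in ℚⁿ. -/
def LambdaOne (n : ℕ) : Fin n → ℚ := fun _ => 1 / 2

/-- The k-th simple root of type Bₙ (1-based index r): α₁ = e₁ and
αᵣ = eᵣ - e_{r-1} for r ≥ 2; expressed with 0-based coordinates. -/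
def simpleRootB (n : ℕ) (r : ℕ) : Fin n → ℚ := fun i =>
  (if (i : ℕ) + 1 = r then 1 else 0) - (if (i : ℕ) + 2 = r then 1 else 0)

/-- Negation of the coordinate `c`. -/
def negCoord {n : ℕ} (c : Fin n) : Equiv.Perm (Fin n → ℚ) :=
  Equiv.piCongrRight fun i => if i = c then Equiv.neg ℚ else Equiv.refl ℚ

/-- The simple reflection `s_k` of type Bₙ: `s₁` negates the first coordinate and,
for `k ≥ 2`, `s_k` exchanges the coordinates `k-1` and `k`. -/
def simpleReflB {n : ℕ} (c : Fin n) : Equiv.Perm (Fin n → ℚ) :=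
  if (c : ℕ) = 0 then negCoord c
  else (Equiv.swap c ⟨(c : ℕ) - 1, Nat.lt_of_le_of_lt (Nat.sub_le _ _) c.isLt⟩).arrowCongr (Equiv.refl ℚ)

/-- The Weyl group of type Bₙ, generated by the simple reflections. -/
def weylB (n : ℕ) : Subgroup (Equiv.Perm (Fin n → ℚ)) :=
  Subgroup.closure (Set.range (simpleReflB (n := n)))

/-- The shifted Young diagram of a strict partition, as a finset of (1-based)
boxes: the (1-based) row `i+1` consists of the boxes `(i+1, j)` for
`i + 1 ≤ j ≤ l[i] + i`. -/
def diagFinset (l : List ℕ) : Finset (ℕ × ℕ) :=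
  (Finset.range l.length).biUnion fun i =>
    (Finset.Icc (i + 1) (l.getD i 0 + i)).image fun j => (i + 1, j)

/-- The residue `res(i,j) = j - i + 1` of a box. -/
def resBox (b : ℕ × ℕ) : ℕ := b.2 + 1 - b.1

/-- wt(λ) = Λ₁ - Σ_{(i,j) ∈ λ} α_{res(i,j)}. -/
noncomputable def wtB (n : ℕ) (l : List ℕ) : Fin n → ℚ :=
  LambdaOne n - ∑ b ∈ diagFinset l, simpleRootB n (resBox b)

/-!
Along row `i` of the shifted diagram the residues are `1, …, λᵢ`, and the corresponding simple roots
telescope to `e_{λᵢ}`. Hence `wt(λ) = Λ₁ - ∑ᵢ e_{λᵢ}`. When the parts are distinct, subtracting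
`e_m` changes the sign of a coordinate equal to `1/2`, so each row acts by the sign change of one
coordinate, which lies in `W` as a conjugate of `s₁`.
-/

section negCoord

variable {n : ℕ}

theorem negCoord_apply (c : Fin n) (v : Fin n → ℚ) (i : Fin n) :
    negCoord c v i = if i = c then -v i else v i := by
  by_cases h : i = c <;> simp [negCoord, h]

theorem negCoord_conj_arrowCongr (σ : Equiv.Perm (Fin n)) (c : Fin n) :
    σ.arrowCongr (Equiv.refl ℚ) * negCoord c * (σ.arrowCongr (Equiv.refl ℚ))⁻¹ =
      negCoord (σ c) := by
  ext v i
  simp [negCoord_apply, Equiv.symm_apply_eq, Equiv.Perm.inv_def]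

theorem simpleReflB_mem_weylB (c : Fin n) : simpleReflB c ∈ weylB n :=
  Subgroup.subset_closure (Set.mem_range_self c)

theorem negCoord_mem_weylB : ∀ c : Fin n, negCoord c ∈ weylB n
  | ⟨0, h⟩ => by simpa [simpleReflB] using simpleReflB_mem_weylB (⟨0, h⟩ : Fin n)
  | ⟨m + 1, h⟩ => by
    have conj : simpleReflB ⟨m + 1, h⟩ * negCoord ⟨m, by omega⟩ * (simpleReflB ⟨m + 1, h⟩)⁻¹ =
        negCoord (⟨m + 1, h⟩ : Fin n) := by
      simp only [simpleReflB, Nat.add_one_ne_zero, if_false, negCoord_conj_arrowCongr,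
        Nat.add_sub_cancel, Equiv.swap_apply_right]
    rw [← conj]
    have hs := simpleReflB_mem_weylB (⟨m + 1, h⟩ : Fin n)
    exact mul_mem (mul_mem hs (negCoord_mem_weylB ⟨m, by omega⟩)) (inv_mem hs)

end negCoord

theorem sum_diagFinset_resBox {M : Type*} [AddCommMonoid M] (f : ℕ → M) (l : List ℕ) :
    ∑ b ∈ diagFinset l, f (resBox b) = (l.map fun m => ∑ r ∈ Finset.range m, f (r + 1)).sum := by
  have row_sum (i m : ℕ) : ∑ b ∈ (Finset.Icc (i + 1) (m + i)).image (fun j => (i + 1, j)),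
      f (resBox b) = ∑ r ∈ Finset.range m, f (r + 1) := by
    rw [Finset.sum_image (Prod.mk_right_injective _).injOn, ← Finset.Ico_add_one_right_eq_Icc,
      Finset.sum_Ico_eq_sum_range]
    refine Finset.sum_congr (by congr 1; omega) fun r _ => ?_
    congr 1
    simp only [resBox]
    omega
  rw [diagFinset, Finset.sum_biUnion]
  · simp only [row_sum]
    rw [Finset.sum_range, ← Fin.sum_univ_fun_getElem]
    simp
  · intro i _ j _ hij
    rw [Function.onFun, Finset.disjoint_left]
    grind

theorem sum_range_simpleRootB (n m : ℕ) (k : Fin n) :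
    ∑ r ∈ Finset.range m, simpleRootB n (r + 1) k = if (k : ℕ) + 1 = m then 1 else 0 := by
  have h := Finset.sum_range_sub (fun r => if (k : ℕ) + 1 = r then (1 : ℚ) else 0) m
  simpa [simpleRootB] using h

theorem wtB_apply (n : ℕ) (l : List ℕ) (k : Fin n) :
    wtB n l k = 1 / 2 - l.count ((k : ℕ) + 1) := by
  simp only [wtB, LambdaOne, Pi.sub_apply, Finset.sum_apply]
  rw [sum_diagFinset_resBox fun r => simpleRootB n r k]
  simp only [sum_range_simpleRootB, eq_comm (a := (k : ℕ) + 1), List.sum_map_ite_eq]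
  simp

theorem wtB_cons {n : ℕ} {l : List ℕ} {c : Fin n} (hc : (c : ℕ) + 1 ∉ l) :
    wtB n (((c : ℕ) + 1) :: l) = negCoord c (wtB n l) := by
  ext k
  by_cases hk : k = c
  · subst hk
    norm_num [negCoord_apply, wtB_apply, List.count_eq_zero_of_not_mem hc]
  · simp [negCoord_apply, wtB_apply, hk, Fin.val_inj, Ne.symm hk]

theorem wtB_mem_weyl_orbit_general (n : ℕ) (l : List ℕ) (hnd : l.Nodup) (hpos : ∀ x ∈ l, 0 < x)
    (hle : ∀ x ∈ l, x ≤ n) : wtB n l ∈ {v | ∃ w ∈ weylB n, w (LambdaOne n) = v} := by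
  induction l with
  | nil => exact ⟨1, one_mem _, by simp [wtB, diagFinset]⟩
  | cons x l ih =>
    simp only [List.nodup_cons, List.forall_mem_cons] at hnd hpos hle
    obtain ⟨w, hw, hwl⟩ := ih hnd.2 hpos.2 hle.2
    obtain ⟨c, rfl⟩ : ∃ c : Fin n, (c : ℕ) + 1 = x := ⟨⟨x - 1, by omega⟩, by grind⟩
    refine ⟨negCoord c * w, mul_mem (negCoord_mem_weylB c) hw, ?_⟩
    rw [Equiv.Perm.mul_apply, hwl, wtB_cons hnd.1]

theorem wtB_mem_weyl_orbit (n : ℕ) (l : List ℕ)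
    (hdec : l.Chain' (· > ·)) (hpos : ∀ x ∈ l, 0 < x) (hle : ∀ x ∈ l, x ≤ n) :
    wtB n l ∈ {v | ∃ w ∈ weylB n, w (LambdaOne n) = v} :=
  wtB_mem_weyl_orbit_general n l (List.isChain_iff_pairwise.mp hdec).nodup hpos hle
end

section
/- The prescribed operators make Sp(b) a module over the quiver Hecke algebra R(β); the cyclotomic ideal ⟨x_ℓ^{⟨h_{ν_ℓ}, Λ_i⟩} e(ν) : ν ∈ I^β⟩ acts by zero, so Sp(b) is a module over the cyclotomic quiver Hecke algebra R^{Λ_i}(ξ); and Sp(b) is a simple R^{Λ_i}(ξ)-module on which every x_k acts by zero (a homogeneous simple module, concentrated in a single degree of the ℤ-grading). -/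
open scoped Classical

namespace QHA

variable (k : Type) [Field k]

/-- Generators of the quiver Hecke algebra `R(β)` on `m` strands with vertex set
`Fin n`: the idempotents `e(ν)`, the polynomial generators `x_p` and the
intertwiners `τ_j` (acting on strands `j`, `j+1`, 0-based). -/
inductive Gen (n m : ℕ) : Type
  | e (ν : Fin m → Fin n) : Gen n m
  | x (p : Fin m) : Gen n m
  | t (j : ℕ) (h : j + 1 < m) : Gen n m

/-- The free algebra on the generators. -/
abbrev FA (n m : ℕ) := FreeAlgebra k (Gen n m)

variable {n m : ℕ}

noncomputable def Eg (ν : Fin m → Fin n) : FA k n m := FreeAlgebra.ι k (Gen.e ν)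
noncomputable def Xg (p : Fin m) : FA k n m := FreeAlgebra.ι k (Gen.x p)
noncomputable def Tg (j : ℕ) (h : j + 1 < m) : FA k n m := FreeAlgebra.ι k (Gen.t j h)

/-- The transposition of the strands `j`, `j+1` (0-based). -/
def posSwap (j : ℕ) (h : j + 1 < m) : Equiv.Perm (Fin m) :=
  Equiv.swap ⟨j, Nat.lt_of_succ_lt h⟩ ⟨j + 1, h⟩

/-- The place-permutation `s_j ν` of a sequence `ν`. -/
def swapSeq (j : ℕ) (h : j + 1 < m) (ν : Fin m → Fin n) : Fin m → Fin n :=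
  ν ∘ posSwap j h

/-- Evaluation of a two-variable polynomial `p(u,v)` at two elements of a
(possibly noncommutative) `k`-algebra, as `Σ t_{p,q} a^p b^q`. -/
noncomputable def eval2 {A : Type} [Ring A] [Algebra k A]
    (p : MvPolynomial (Fin 2) k) (a b : A) : A :=
  ∑ d ∈ p.support, algebraMap k A (MvPolynomial.coeff d p) * (a ^ d 0 * b ^ d 1)

/-- Evaluation of a three-variable polynomial. -/
noncomputable def eval3 {A : Type} [Ring A] [Algebra k A]
    (p : MvPolynomial (Fin 3) k) (a b c : A) : A :=
  ∑ d ∈ p.support, algebraMap k A (MvPolynomial.coeff d p) * (a ^ d 0 * b ^ d 1 * c ^ d 2)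

/-- For `p = Q(u,v)`, the polynomial `(Q(u,v) - Q(w,v))/(u - w)` in the three
variables `u = X 0`, `v = X 1`, `w = X 2` (exact division by the monic `u - w`). -/
noncomputable def Qbar (p : MvPolynomial (Fin 2) k) : MvPolynomial (Fin 3) k :=
  (MvPolynomial.finSuccEquiv k 2).symm
    (Polynomial.divByMonic
      ((MvPolynomial.finSuccEquiv k 2)
        (MvPolynomial.rename (fun i : Fin 2 => if i = 0 then (0 : Fin 3) else 1) p -
          MvPolynomial.rename (fun i : Fin 2 => if i = 0 then (2 : Fin 3) else 1) p))
      (Polynomial.X - Polynomial.C (MvPolynomial.X 1)))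

/-- Admissibility of the family `Q_{i,j}(u,v)` of polynomials with respect to the
(symmetrizable) Cartan matrix `A` and symmetrizing integers `d`
(so `(α_i, α_j) = d_i A_{i j}`):
`Q_{i,i} = 0`; `Q_{j,i}(u,v) = Q_{i,j}(v,u)`; `Q_{i,j} = 1` whenever `(α_i,α_j) = 0`
(`i ≠ j`); `Q_{i,j}` is supported on `(p,q)` with
`(α_i,α_i) p + (α_j,α_j) q = -2(α_i,α_j)`; and `t_{i,j;-a_{ij},0} ≠ 0`. -/
def QAdmissible (A : Fin n → Fin n → ℤ) (d : Fin n → ℤ)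
    (Q : Fin n → Fin n → MvPolynomial (Fin 2) k) : Prop :=
  (∀ i, Q i i = 0) ∧
  (∀ i j, Q j i = MvPolynomial.rename (Equiv.swap (0 : Fin 2) 1) (Q i j)) ∧
  (∀ i j, i ≠ j → d i * A i j = 0 → Q i j = 1) ∧
  (∀ i j, i ≠ j → ∀ dd ∈ (Q i j).support,
    (2 * d i) * (dd 0 : ℤ) + (2 * d j) * (dd 1 : ℤ) = -2 * (d i * A i j)) ∧
  (∀ i j, i ≠ j →
    MvPolynomial.coeff (Finsupp.single (0 : Fin 2) (-(A i j)).toNat) (Q i j) ≠ 0)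

/-- The defining relations of the quiver Hecke algebra `R(β)`, where
`S ⊆ I^m` is the set of admissible sequences (`I^β`; `e(ν) = 0` for `ν ∉ S`). -/
inductive Rel (Q : Fin n → Fin n → MvPolynomial (Fin 2) k) (S : Set (Fin m → Fin n)) :
    FA k n m → FA k n m → Prop
  | e_orth (ν ν' : Fin m → Fin n) (hne : ν ≠ ν') : Rel Q S (Eg k ν * Eg k ν') 0
  | e_idem (ν : Fin m → Fin n) : Rel Q S (Eg k ν * Eg k ν) (Eg k ν)
  | e_sum : Rel Q S (∑ ν : Fin m → Fin n, Eg k ν) 1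
  | e_out (ν : Fin m → Fin n) (hν : ν ∉ S) : Rel Q S (Eg k ν) 0
  | xx (p q : Fin m) : Rel Q S (Xg k p * Xg k q) (Xg k q * Xg k p)
  | xe (p : Fin m) (ν : Fin m → Fin n) : Rel Q S (Xg k p * Eg k ν) (Eg k ν * Xg k p)
  | te (j : ℕ) (h : j + 1 < m) (ν : Fin m → Fin n) :
      Rel Q S (Tg k j h * Eg k ν) (Eg k (swapSeq j h ν) * Tg k j h)
  | tt (a : ℕ) (ha : a + 1 < m) (b : ℕ) (hb : b + 1 < m) (hab : a + 1 < b ∨ b + 1 < a) :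
      Rel Q S (Tg k a ha * Tg k b hb) (Tg k b hb * Tg k a ha)
  | tsq (j : ℕ) (h : j + 1 < m) (ν : Fin m → Fin n) :
      Rel Q S (Tg k j h * Tg k j h * Eg k ν)
        (eval2 k (Q (ν ⟨j, Nat.lt_of_succ_lt h⟩) (ν ⟨j + 1, h⟩))
          (Xg k ⟨j, Nat.lt_of_succ_lt h⟩) (Xg k ⟨j + 1, h⟩) * Eg k ν)
  | tx_left (j : ℕ) (h : j + 1 < m) (ν : Fin m → Fin n)
      (hv : ν ⟨j, Nat.lt_of_succ_lt h⟩ = ν ⟨j + 1, h⟩) :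
      Rel Q S (Tg k j h * Xg k ⟨j, Nat.lt_of_succ_lt h⟩ * Eg k ν)
        (Xg k ⟨j + 1, h⟩ * Tg k j h * Eg k ν - Eg k ν)
  | tx_right (j : ℕ) (h : j + 1 < m) (ν : Fin m → Fin n)
      (hv : ν ⟨j, Nat.lt_of_succ_lt h⟩ = ν ⟨j + 1, h⟩) :
      Rel Q S (Tg k j h * Xg k ⟨j + 1, h⟩ * Eg k ν)
        (Xg k ⟨j, Nat.lt_of_succ_lt h⟩ * Tg k j h * Eg k ν + Eg k ν)
  | tx_comm (j : ℕ) (h : j + 1 < m) (ν : Fin m → Fin n) (p : Fin m)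
      (hcase : ν ⟨j, Nat.lt_of_succ_lt h⟩ ≠ ν ⟨j + 1, h⟩ ∨ ((p : ℕ) ≠ j ∧ (p : ℕ) ≠ j + 1)) :
      Rel Q S (Tg k j h * Xg k p * Eg k ν) (Xg k (posSwap j h p) * Tg k j h * Eg k ν)
  | braid_ne (j : ℕ) (h1 : j + 1 < m) (h2 : j + 2 < m) (ν : Fin m → Fin n)
      (hv : ν ⟨j, by omega⟩ ≠ ν ⟨j + 2, h2⟩) :
      Rel Q S
        (Tg k (j + 1) (by omega) * Tg k j h1 * Tg k (j + 1) (by omega) * Eg k ν)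
        (Tg k j h1 * Tg k (j + 1) (by omega) * Tg k j h1 * Eg k ν)
  | braid_eq (j : ℕ) (h1 : j + 1 < m) (h2 : j + 2 < m) (ν : Fin m → Fin n)
      (hv : ν ⟨j, by omega⟩ = ν ⟨j + 2, h2⟩) :
      Rel Q S
        (Tg k (j + 1) (by omega) * Tg k j h1 * Tg k (j + 1) (by omega) * Eg k ν)
        (Tg k j h1 * Tg k (j + 1) (by omega) * Tg k j h1 * Eg k ν +
          eval3 k (Qbar k (Q (ν ⟨j, by omega⟩) (ν ⟨j + 1, h1⟩)))
            (Xg k ⟨j, by omega⟩) (Xg k ⟨j + 1, h1⟩) (Xg k ⟨j + 2, h2⟩) * Eg k ν)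

/-- The extra cyclotomic relations `x_m^{⟨h_{ν_m}, Λ⟩} e(ν) = 0` (`ν ∈ I^β`),
where `Λ` is written in fundamental-weight coordinates, so `⟨h_i, Λ⟩ = Λ i`. -/
inductive CycRel (Λ : Fin n → ℤ) (S : Set (Fin m → Fin n)) :
    FA k n m → FA k n m → Prop
  | cyc (ν : Fin m → Fin n) (hν : ν ∈ S) (p : Fin m) (hp : (p : ℕ) + 1 = m) :
      CycRel Λ S (Xg k p ^ (Λ (ν p)).toNat * Eg k ν) 0

/-- Relations of the cyclotomic quiver Hecke algebra `R^Λ(β)`. -/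
def CRel (Q : Fin n → Fin n → MvPolynomial (Fin 2) k) (S : Set (Fin m → Fin n))
    (Λ : Fin n → ℤ) : FA k n m → FA k n m → Prop :=
  fun a b => Rel k Q S a b ∨ CycRel k Λ S a b

/-- The `j`-th column of the Cartan matrix: the simple root `α_j` written in
fundamental-weight coordinates (`⟨h_i, α_j⟩ = A i j`). -/
def αcol (A : Fin n → Fin n → ℤ) (j : Fin n) : Fin n → ℤ := fun i => A i j

/-- `FPath A Λ [i₁, …, i_ℓ] ξ` means `f̃_{i₁} ⋯ f̃_{i_ℓ} Λ = ξ` in the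
minuscule crystal realized on the Weyl orbit of `Λ`:
`f̃_j μ = μ - α_j` whenever `⟨h_j, μ⟩ = 1` (and is undefined otherwise). -/
inductive FPath (A : Fin n → Fin n → ℤ) (Λ : Fin n → ℤ) :
    List (Fin n) → (Fin n → ℤ) → Prop
  | nil : FPath A Λ [] Λ
  | cons (j : Fin n) (l : List (Fin n)) (ξ : Fin n → ℤ) :
      FPath A Λ l ξ → ξ j = 1 → FPath A Λ (j :: l) (ξ - αcol A j)

/-- The simple reflection `s_j μ = μ - ⟨h_j, μ⟩ α_j` on the weight lattice. -/
def sRef (A : Fin n → Fin n → ℤ) (j : Fin n) (μ : Fin n → ℤ) : Fin n → ℤ :=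
  fun i => μ i - μ j * A i j

/-- The Weyl group orbit of `Λ` (the Weyl group being generated by the
involutions `s_j`, its orbit consists of images under words in the `s_j`). -/
def orbitW (A : Fin n → Fin n → ℤ) (Λ : Fin n → ℤ) : Set (Fin n → ℤ) :=
  {ξ | ∃ l : List (Fin n), l.foldr (sRef A) Λ = ξ}

end QHA

namespace QHA

variable (k : Type) [Field k] {n : ℕ}

section Paths

variable (A : Fin n → Fin n → ℤ) (Λ ξ : Fin n → ℤ) (ℓ : ℕ)

/-- The set `Pa(b)` of paths from the highest weight `Λ` to `ξ = wt(b)`,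
as length-`ℓ` sequences. -/
def PaT : Type := {ν : Fin ℓ → Fin n // FPath A Λ (List.ofFn ν) ξ}

/-- The underlying vector space of `Sp(b)`, with basis (the delta functions of)
the paths in `Pa(b)`. -/
abbrev PaV : Type := PaT A Λ ξ ℓ → k

/-- The prescribed action of `e(μ)`: projection onto the span of `p(μ)`. -/
noncomputable def eOpPa (μ : Fin ℓ → Fin n) : Module.End k (PaV k A Λ ξ ℓ) :=
  LinearMap.pi fun ν => if ν.val = μ then LinearMap.proj ν else 0

/-- The prescribed action of `τ_j`:  `p(ν) ↦ p(s_j ν)` if `s_j ν ∈ Pa(b)`, else `0`. -/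
noncomputable def tOpPa (j : ℕ) (h : j + 1 < ℓ) : Module.End k (PaV k A Λ ξ ℓ) :=
  LinearMap.pi fun ν =>
    if hh : FPath A Λ (List.ofFn (swapSeq j h ν.val)) ξ then
      LinearMap.proj (⟨swapSeq j h ν.val, hh⟩ : PaT A Λ ξ ℓ) else 0

/-- `I^β` for `β = Λ - ξ`:  sequences whose content is `β`
(written in fundamental-weight coordinates via `α`-columns). -/
def Iβ : Set (Fin ℓ → Fin n) :=
  {ν | ∑ p : Fin ℓ, αcol A (ν p) = fun i => Λ i - ξ i}

end Paths

/-!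
`Sp(b)` has a basis of vectors `p(ν)` on which `τ_j` acts as the partial permutation `s_j`, defined
exactly when the letters `ν_j` and `ν_{j+1}` are orthogonal. A word in the `τ_j` is therefore a
permutation restricted by orthogonality conditions, and the conditions attached to the two sides of
a commutation or braid relation agree. As the `x_p` act by zero, only the constant terms of the
polynomials `Q_{i,j}` and of their divided differences matter; adjacent letters of a path differ,
and a path containing `a b a` forces `a_{ab} = -2`, where by degree reasons the constant term of
the divided difference vanishes.

For simplicity, every coordinate of a weight reached by a path is at least `-1`. Given two paths to
the same weight, this bound allows the first letter of one to be moved to the front of the other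
through letters orthogonal to it; by induction any two paths are connected by orthogonal swaps, so
the `τ_j` carry any `p(ν)` to every other one, while the `e(ν)` project onto the basis lines.
-/

/-! ### Paths as words -/

namespace FPath

variable {A : Fin n → Fin n → ℤ} {Λ η η' : Fin n → ℤ} {a b : Fin n} {u w l l' : List (Fin n)}

theorem cons_iff :
    FPath A Λ (a :: l) η ↔ FPath A Λ l (η + αcol A a) ∧ (η + αcol A a) a = 1 := by
  refine ⟨fun h => ?_, fun ⟨h, ha⟩ => ?_⟩
  · cases h with
    | cons _ _ μ h ha => simpa using ⟨h, ha⟩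
  · simpa using FPath.cons a l _ h ha

theorem sum_map_αcol (h : FPath A Λ l η) : (l.map (αcol A)).sum = Λ - η := by
  induction h with
  | nil => simp
  | cons j l μ _ _ ih =>
    rw [List.map_cons, List.sum_cons, ih]
    abel

theorem weight_unique (h : FPath A Λ l η) (h' : FPath A Λ l η') : η = η' :=
  sub_right_injective (h.sum_map_αcol.symm.trans h'.sum_map_αcol)

theorem exists_drop (h : FPath A Λ l η) (j : ℕ) : ∃ η', FPath A Λ (l.drop j) η' := by
  induction j generalizing l η with
  | zero => exact ⟨η, h⟩
  | succ j ih =>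
    cases l with
    | nil => exact ⟨η, h⟩
    | cons a l => exact ih (cons_iff.1 h).1

theorem append_mono (hw : ∀ μ, FPath A Λ l μ → FPath A Λ l' μ) (h : FPath A Λ (u ++ l) η) :
    FPath A Λ (u ++ l') η := by
  induction u generalizing η with
  | nil => exact hw η h
  | cons c u ih =>
    obtain ⟨h, hc⟩ := cons_iff.1 h
    exact cons_iff.2 ⟨ih h, hc⟩

theorem swap_head (hab : A a b = 0) (hba : A b a = 0) (h : FPath A Λ (a :: b :: w) η) :
    FPath A Λ (b :: a :: w) η := by
  simp only [cons_iff, Pi.add_apply, αcol, hab, hba, add_zero] at h ⊢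
  obtain ⟨⟨hw, hb⟩, ha⟩ := h
  exact ⟨⟨by rwa [add_right_comm], ha⟩, hb⟩

theorem swap (hab : A a b = 0) (hba : A b a = 0) (h : FPath A Λ (u ++ a :: b :: w) η) :
    FPath A Λ (u ++ b :: a :: w) η :=
  h.append_mono fun _ => swap_head hab hba

theorem orthogonal_of_swap_head (h : FPath A Λ (a :: b :: w) η)
    (h' : FPath A Λ (b :: a :: w) η') : A a b = 0 := by
  obtain ⟨hb, ha⟩ := cons_iff.1 h
  obtain ⟨hw, -⟩ := cons_iff.1 hb
  obtain ⟨hw', ha'⟩ := cons_iff.1 (cons_iff.1 h').1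
  have hwt : η a + A a a + A a b = η' a + A a b + A a a :=
    congrFun (hw.weight_unique hw') a
  simp only [Pi.add_apply, αcol] at ha ha'
  omega

theorem head_ne_second (hdiag : ∀ i, A i i = 2) (h : FPath A Λ (a :: b :: w) η) : a ≠ b := by
  rintro rfl
  simp only [cons_iff, Pi.add_apply, αcol, hdiag] at h
  omega

theorem entry_eq_neg_two_of_repeat (hdiag : ∀ i, A i i = 2)
    (h : FPath A Λ (a :: b :: a :: w) η) : A a b = -2 := by
  simp only [cons_iff, Pi.add_apply, αcol, hdiag] at h
  omega

theorem eq_one_of_singleton (h : FPath A Λ [a] η) : Λ a = 1 := by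
  obtain ⟨h, ha⟩ := cons_iff.1 h
  rwa [h.weight_unique .nil] at ha

/-- A step of type `b` takes the `b`-th coordinate from `1` to `-1`, and every other step weakly
increases it. -/
theorem neg_one_le (hdiag : ∀ i, A i i = 2) (hoff : ∀ i j, i ≠ j → A i j ≤ 0)
    (hΛ : ∀ i, 0 ≤ Λ i) (h : FPath A Λ l η) (b : Fin n) : -1 ≤ η b := by
  induction h with
  | nil => exact (hΛ b).trans' (by norm_num)
  | cons j _ μ _ hj ih =>
    simp only [Pi.sub_apply, αcol]
    rcases eq_or_ne b j with rfl | hbj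
    · simp [hj, hdiag]
    · linarith [hoff b j hbj]

end FPath

/-- The elementary move on words exchanging two adjacent letters `a`, `b` with `A a b = 0`. -/
def CommStep (A : Fin n → Fin n → ℤ) (l l' : List (Fin n)) : Prop :=
  ∃ u a b w, A a b = 0 ∧ l = u ++ a :: b :: w ∧ l' = u ++ b :: a :: w

section Commutation

open Relation

variable {A : Fin n → Fin n → ℤ} {Λ η : Fin n → ℤ} {l l' : List (Fin n)}

theorem CommStep.cons (c : Fin n) (h : CommStep A l l') : CommStep A (c :: l) (c :: l') := by
  obtain ⟨u, a, b, w, hab, rfl, rfl⟩ := h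
  exact ⟨c :: u, a, b, w, hab, rfl, rfl⟩

theorem CommStep.length_eq (h : CommStep A l l') : l.length = l'.length := by
  obtain ⟨u, a, b, w, -, rfl, rfl⟩ := h
  simp

theorem length_eq_of_reflTransGen_commStep (h : ReflTransGen (CommStep A) l l') :
    l.length = l'.length := by
  induction h with
  | refl => rfl
  | tail _ hstep ih => exact ih.trans hstep.length_eq

theorem CommStep.fpath (hzero : ∀ i j, A i j = 0 → A j i = 0) (h : CommStep A l l')
    (hl : FPath A Λ l η) : FPath A Λ l' η := by
  obtain ⟨u, a, b, w, hab, rfl, rfl⟩ := h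
  exact hl.swap hab (hzero a b hab)

/-- If the last letter `c` applied is not `b`, the weight before it has `b`-th coordinate
`-1 + A b c`; as this is at least `-1`, the letters `b` and `c` commute. -/
theorem FPath.exists_commStep_cons (hdiag : ∀ i, A i i = 2) (hoff : ∀ i j, i ≠ j → A i j ≤ 0)
    (hzero : ∀ i j, A i j = 0 → A j i = 0) (hΛ : ∀ i, 0 ≤ Λ i) {b : Fin n}
    (h : FPath A Λ l η) (hb : η b = -1) :
    ∃ l', FPath A Λ (b :: l') η ∧ ReflTransGen (CommStep A) l (b :: l') := by
  induction l generalizing η with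
  | nil =>
    have hΛb := hΛ b
    rw [FPath.weight_unique .nil h] at hΛb
    omega
  | cons c l ih =>
    rcases eq_or_ne b c with rfl | hbc
    · exact ⟨l, h, .refl⟩
    obtain ⟨hl, hc⟩ := cons_iff.1 h
    have hge : -1 ≤ η b + A b c := hl.neg_one_le hdiag hoff hΛ b
    have hbc0 : A b c = 0 := by linarith [hoff b c hbc]
    obtain ⟨l', hl', hmoves⟩ := ih hl (by simp [αcol, hb, hbc0])
    refine ⟨c :: l', (cons_iff.2 ⟨hl', hc⟩).swap_head (hzero b c hbc0) hbc0, ?_⟩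
    have hcons : ReflTransGen (CommStep A) (c :: l) (c :: b :: l') :=
      hmoves.lift (c :: ·) fun _ _ => CommStep.cons c
    exact hcons.tail ⟨[], c, b, l', hzero b c hbc0, rfl, rfl⟩

theorem FPath.reflTransGen_commStep (hdiag : ∀ i, A i i = 2) (hoff : ∀ i j, i ≠ j → A i j ≤ 0)
    (hzero : ∀ i j, A i j = 0 → A j i = 0) (hΛ : ∀ i, 0 ≤ Λ i)
    (h : FPath A Λ l η) (h' : FPath A Λ l' η) (hlen : l.length = l'.length) :
    ReflTransGen (CommStep A) l l' := by
  induction l' generalizing l η with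
  | nil => rw [List.length_eq_zero_iff.1 hlen]
  | cons b l' ih =>
    obtain ⟨hl', hb⟩ := cons_iff.1 h'
    have hηb : η b = -1 := by
      simp only [Pi.add_apply, αcol, hdiag] at hb
      omega
    obtain ⟨l₂, hl₂, hmoves⟩ := h.exists_commStep_cons hdiag hoff hzero hΛ hηb
    have hlen₂ : l₂.length = l'.length := by
      simpa [hlen, eq_comm] using length_eq_of_reflTransGen_commStep hmoves
    have htail := ih (cons_iff.1 hl₂).1 hl' hlen₂
    exact hmoves.trans (htail.lift (b :: ·) fun _ _ => CommStep.cons b)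

end Commutation

/-! ### Paths as sequences -/

section Sequences

variable {m : ℕ} (ν : Fin m → Fin n)

theorem swapSeq_apply (j : ℕ) (h : j + 1 < m) (p : Fin m) :
    swapSeq j h ν p = if (p : ℕ) = j then ν ⟨j + 1, h⟩ else
      if (p : ℕ) = j + 1 then ν ⟨j, Nat.lt_of_succ_lt h⟩ else ν p := by
  simp only [swapSeq, posSwap, Function.comp_apply, Equiv.swap_apply_def, Fin.ext_iff]
  split_ifs <;> rfl

theorem swapSeq_involutive (j : ℕ) (h : j + 1 < m) :
    Function.Involutive (swapSeq j h : (Fin m → Fin n) → Fin m → Fin n) := fun ν => by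
  funext p
  simp [swapSeq, posSwap]

theorem swapSeq_comm {i j : ℕ} (hi : i + 1 < m) (hj : j + 1 < m) (hij : i + 1 < j ∨ j + 1 < i) :
    swapSeq i hi (swapSeq j hj ν) = swapSeq j hj (swapSeq i hi ν) := by
  funext p
  simp only [swapSeq_apply]
  split_ifs <;> first | rfl | omega

theorem swapSeq_braid (j : ℕ) (h₁ : j + 1 < m) (h₂ : j + 1 + 1 < m) :
    swapSeq (j + 1) h₂ (swapSeq j h₁ (swapSeq (j + 1) h₂ ν)) =
      swapSeq j h₁ (swapSeq (j + 1) h₂ (swapSeq j h₁ ν)) := by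
  funext p
  simp only [swapSeq_apply]
  split_ifs <;> first | rfl | omega

/-- Whether the letters at positions `j` and `j + 1` commute; for a path `ν` this says exactly that
`s_j ν` is again a path. -/
def Swappable (A : Fin n → Fin n → ℤ) (j : ℕ) (h : j + 1 < m) (ν : Fin m → Fin n) : Prop :=
  A (ν ⟨j, Nat.lt_of_succ_lt h⟩) (ν ⟨j + 1, h⟩) = 0

theorem swappable_swapSeq_iff {A : Fin n → Fin n → ℤ} {i j : ℕ} (hi : i + 1 < m) (hj : j + 1 < m)
    (hij : i + 1 < j ∨ j + 1 < i) : Swappable A i hi (swapSeq j hj ν) ↔ Swappable A i hi ν := by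
  have hne : i ≠ j ∧ i ≠ j + 1 ∧ i + 1 ≠ j := by omega
  simp [Swappable, swapSeq_apply, hne]

theorem drop_ofFn {j : ℕ} (h : j < m) :
    (List.ofFn ν).drop j = ν ⟨j, h⟩ :: (List.ofFn ν).drop (j + 1) := by
  rw [List.drop_eq_getElem_cons (by simpa using h), List.getElem_ofFn]

theorem ofFn_eq_append {j : ℕ} (h : j + 1 < m) :
    List.ofFn ν = (List.ofFn ν).take j ++
      ν ⟨j, Nat.lt_of_succ_lt h⟩ :: ν ⟨j + 1, h⟩ :: (List.ofFn ν).drop (j + 2) := by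
  rw [← drop_ofFn ν h, ← drop_ofFn ν (Nat.lt_of_succ_lt h), List.take_append_drop]

theorem ofFn_swapSeq {j : ℕ} (h : j + 1 < m) :
    List.ofFn (swapSeq j h ν) = (List.ofFn ν).take j ++
      ν ⟨j + 1, h⟩ :: ν ⟨j, Nat.lt_of_succ_lt h⟩ :: (List.ofFn ν).drop (j + 2) := by
  have htake : (List.ofFn (swapSeq j h ν)).take j = (List.ofFn ν).take j := by
    refine List.ext_getElem (by simp) fun i hi _ => ?_
    have hij : i < j := hi.trans_le (List.length_take_le j _)
    simp [swapSeq_apply, hij.ne, (hij.trans j.lt_succ_self).ne]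
  have hdrop : (List.ofFn (swapSeq j h ν)).drop (j + 2) = (List.ofFn ν).drop (j + 2) := by
    refine List.ext_getElem (by simp) fun i _ _ => ?_
    have hij : j + 2 + i ≠ j ∧ j + 2 + i ≠ j + 1 := by omega
    simp [swapSeq_apply, hij]
  rw [ofFn_eq_append (swapSeq j h ν) h, htake, hdrop]
  simp [swapSeq_apply]

variable {A : Fin n → Fin n → ℤ} {Λ ξ : Fin n → ℤ} {ν}

theorem CommStep.exists_swapSeq {l : List (Fin n)} (hstep : CommStep A (List.ofFn ν) l) :
    ∃ j h, List.ofFn (swapSeq j h ν) = l := by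
  obtain ⟨u, a, b, w, -, heq, rfl⟩ := hstep
  have h : u.length + 1 < m := by
    have hlen := congrArg List.length heq
    simp only [List.length_ofFn, List.length_append, List.length_cons] at hlen
    omega
  have hcons := heq.symm.trans (ofFn_eq_append ν h)
  obtain ⟨hu, habw⟩ := List.append_inj hcons (by simp; omega)
  simp only [List.cons.injEq] at habw
  obtain ⟨rfl, rfl, rfl⟩ := habw
  refine ⟨u.length, h, ?_⟩
  rw [ofFn_swapSeq, ← hu]

theorem FPath.swapSeq_iff (hzero : ∀ i j, A i j = 0 → A j i = 0)
    (hν : FPath A Λ (List.ofFn ν) ξ) (j : ℕ) (h : j + 1 < m) :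
    FPath A Λ (List.ofFn (swapSeq j h ν)) ξ ↔ Swappable A j h ν := by
  refine ⟨fun hswap => ?_, fun hj => ?_⟩
  · obtain ⟨_, hd⟩ := hν.exists_drop j
    obtain ⟨_, hd'⟩ := hswap.exists_drop j
    rw [drop_ofFn ν (Nat.lt_of_succ_lt h), drop_ofFn ν h] at hd
    rw [ofFn_swapSeq, List.drop_left' (by simp; omega)] at hd'
    exact hd.orthogonal_of_swap_head hd'
  · rw [ofFn_eq_append ν h] at hν
    rw [ofFn_swapSeq]
    exact hν.swap hj (hzero _ _ hj)

theorem FPath.apply_ne_apply_succ (hdiag : ∀ i, A i i = 2) (hν : FPath A Λ (List.ofFn ν) ξ)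
    (j : ℕ) (h : j + 1 < m) : ν ⟨j, Nat.lt_of_succ_lt h⟩ ≠ ν ⟨j + 1, h⟩ := by
  obtain ⟨_, hd⟩ := hν.exists_drop j
  rw [drop_ofFn ν (Nat.lt_of_succ_lt h), drop_ofFn ν h] at hd
  exact hd.head_ne_second hdiag

theorem FPath.entry_eq_neg_two (hdiag : ∀ i, A i i = 2) (hν : FPath A Λ (List.ofFn ν) ξ)
    {j : ℕ} (h : j + 2 < m) (hj : ν ⟨j, by omega⟩ = ν ⟨j + 2, h⟩) :
    A (ν ⟨j, by omega⟩) (ν ⟨j + 1, by omega⟩) = -2 := by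
  obtain ⟨_, hd⟩ := hν.exists_drop j
  rw [drop_ofFn ν (by omega), drop_ofFn ν (by omega), drop_ofFn ν h, ← hj] at hd
  exact hd.entry_eq_neg_two_of_repeat hdiag

theorem FPath.mem_Iβ (hν : FPath A Λ (List.ofFn ν) ξ) : ν ∈ Iβ A Λ ξ m := by
  have hsum := hν.sum_map_αcol
  rwa [List.map_ofFn, List.sum_ofFn] at hsum

theorem FPath.weight_last_eq_one (hν : FPath A Λ (List.ofFn ν) ξ) {p : Fin m}
    (hp : (p : ℕ) + 1 = m) : Λ (ν p) = 1 := by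
  obtain ⟨_, hd⟩ := hν.exists_drop p
  rw [drop_ofFn ν p.isLt, List.drop_eq_nil_of_le (by simp [hp])] at hd
  exact hd.eq_one_of_singleton

end Sequences

/-! ### Polynomials evaluated at zero -/

section Evaluation

open MvPolynomial

variable {k} {B C : Type} [Ring B] [Algebra k B] [Ring C] [Algebra k C]

theorem map_eval2 (φ : B →ₐ[k] C) (p : MvPolynomial (Fin 2) k) (a b : B) :
    φ (eval2 k p a b) = eval2 k p (φ a) (φ b) := by
  simp [eval2]

theorem map_eval3 (φ : B →ₐ[k] C) (p : MvPolynomial (Fin 3) k) (a b c : B) :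
    φ (eval3 k p a b c) = eval3 k p (φ a) (φ b) (φ c) := by
  simp [eval3]

theorem eval2_zero (p : MvPolynomial (Fin 2) k) :
    eval2 k p 0 0 = algebraMap k B (coeff 0 p) := by
  rw [eval2, Finset.sum_eq_single 0]
  · simp
  · intro d _ hd
    have : d 0 ≠ 0 ∨ d 1 ≠ 0 := by
      by_contra! hc
      exact hd (by ext i; fin_cases i <;> simp [hc])
    rcases this with h | h <;> simp [h]
  · intro h
    simp [notMem_support_iff.1 h]

theorem eval3_zero (p : MvPolynomial (Fin 3) k) :
    eval3 k p 0 0 0 = algebraMap k B (coeff 0 p) := by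
  rw [eval3, Finset.sum_eq_single 0]
  · simp
  · intro d _ hd
    have : d 0 ≠ 0 ∨ d 1 ≠ 0 ∨ d 2 ≠ 0 := by
      by_contra! hc
      exact hd (by ext i; fin_cases i <;> simp [hc])
    rcases this with h | h | h <;> simp [h]
  · intro h
    simp [notMem_support_iff.1 h]

theorem eval_finSuccEquiv_rename (p : MvPolynomial (Fin 2) k) :
    (finSuccEquiv k 2 (rename (fun i : Fin 2 => if i = 0 then (0 : Fin 3) else 1) p)).eval (X 1) =
      (finSuccEquiv k 2 (rename (fun i : Fin 2 => if i = 0 then (2 : Fin 3) else 1) p)).eval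
        (X 1) := by
  have hX2 : finSuccEquiv k 2 (X 2) = Polynomial.C (X 1) := finSuccEquiv_X_succ (j := 1)
  induction p using MvPolynomial.induction_on with
  | C c => simp
  | add p q hp hq => simp only [map_add, Polynomial.eval_add, hp, hq]
  | mul_X p i hp =>
    simp only [map_mul, rename_X, Polynomial.eval_mul, hp]
    fin_cases i <;> simp [hX2, finSuccEquiv_X_zero]

theorem X_sub_X_mul_Qbar (p : MvPolynomial (Fin 2) k) :
    (X 0 - X 2) * Qbar k p =
      rename (fun i : Fin 2 => if i = 0 then (0 : Fin 3) else 1) p -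
        rename (fun i : Fin 2 => if i = 0 then (2 : Fin 3) else 1) p := by
  have hX2 : finSuccEquiv k 2 (X 2) = Polynomial.C (X 1) := finSuccEquiv_X_succ (j := 1)
  apply (finSuccEquiv k 2).injective
  rw [map_mul, map_sub, finSuccEquiv_X_zero, hX2, Qbar, AlgEquiv.apply_symm_apply,
    Polynomial.mul_divByMonic_eq_iff_isRoot, Polynomial.IsRoot, map_sub, Polynomial.eval_sub,
    eval_finSuccEquiv_rename, sub_self]

theorem coeff_zero_Qbar (p : MvPolynomial (Fin 2) k) :
    coeff 0 (Qbar k p) = coeff (Finsupp.single 0 1) p := by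
  have hinj : Function.Injective (fun i : Fin 2 => if i = 0 then (0 : Fin 3) else 1) := by
    decide
  have hleft := coeff_rename_mapDomain _ hinj p (Finsupp.single 0 1)
  have hright : coeff (Finsupp.single 0 1)
      (rename (fun i : Fin 2 => if i = 0 then (2 : Fin 3) else 1) p) = 0 := by
    refine coeff_rename_eq_zero _ _ _ fun u hu => absurd (DFunLike.congr_fun hu 0) ?_
    rw [Finsupp.mapDomain_of_notMem_range _ _ (by decide)]
    simp
  rw [Finsupp.mapDomain_single, if_pos rfl] at hleft
  have h := congrArg (coeff (Finsupp.single 0 1)) (X_sub_X_mul_Qbar p)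
  simpa [sub_mul, coeff_X_mul', hleft, hright] using h

variable {A : Fin n → Fin n → ℤ} {d : Fin n → ℤ} {Q : Fin n → Fin n → MvPolynomial (Fin 2) k}
  {i j : Fin n}

theorem QAdmissible.coeff_zero (hQ : QAdmissible k A d Q) (hd : d i ≠ 0) (hij : i ≠ j) :
    coeff 0 (Q i j) = if A i j = 0 then 1 else 0 := by
  obtain ⟨-, -, hone, hsupp, -⟩ := hQ
  split_ifs with h
  · simp [hone i j hij (by simp [h])]
  · by_contra hc
    simpa [hd, h] using hsupp i j hij 0 (mem_support_iff.2 hc)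

theorem QAdmissible.coeff_single_zero (hQ : QAdmissible k A d Q) (hd : d i ≠ 0) (hij : i ≠ j)
    (hA : A i j ≠ -1) : coeff (Finsupp.single 0 1) (Q i j) = 0 := by
  obtain ⟨-, -, -, hsupp, -⟩ := hQ
  by_contra hc
  have hdeg : 2 * d i = -2 * (d i * A i j) := by
    simpa using hsupp i j hij _ (mem_support_iff.2 hc)
  have : d i * (A i j + 1) = 0 := by linarith
  exact hA (by simpa [hd, add_eq_zero_iff_eq_neg] using this)

end Evaluation

/-! ### The operators on `Sp(b)` -/

section Operators

variable (A : Fin n → Fin n → ℤ) (Λ ξ : Fin n → ℤ) {m : ℕ}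

instance : Finite (PaT A Λ ξ m) := Subtype.finite

/-- The basis vector `p(ν)` of `Sp(b)`, extended to all sequences by `p(ν) = 0` for
`ν ∉ Pa(b)`. -/
def pathVec (ν : Fin m → Fin n) : PaV k A Λ ξ m := fun κ => if κ.val = ν then 1 else 0

variable {A Λ ξ}

theorem pathVec_val (ν : PaT A Λ ξ m) :
    pathVec k A Λ ξ ν.val = Pi.basisFun k (PaT A Λ ξ m) ν := by
  funext κ
  simp only [pathVec, Pi.basisFun_apply, Pi.single_apply]
  exact if_congr Subtype.ext_iff.symm rfl rfl

theorem pathVec_eq_zero {ν : Fin m → Fin n} (hν : ¬FPath A Λ (List.ofFn ν) ξ) :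
    pathVec k A Λ ξ ν = 0 :=
  funext fun κ => if_neg fun (hκ : κ.val = ν) => hν (hκ ▸ κ.property)

theorem pathVec_ne_zero {ν : Fin m → Fin n} (hν : FPath A Λ (List.ofFn ν) ξ) :
    pathVec k A Λ ξ ν ≠ 0 := fun h =>
  one_ne_zero ((if_pos rfl).symm.trans (congrFun h ⟨ν, hν⟩))

variable {k} in
theorem end_ext_pathVec {S T : Module.End k (PaV k A Λ ξ m)}
    (h : ∀ ν, FPath A Λ (List.ofFn ν) ξ → S (pathVec k A Λ ξ ν) = T (pathVec k A Λ ξ ν)) :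
    S = T :=
  (Pi.basisFun k (PaT A Λ ξ m)).ext fun ν => by
    rw [← pathVec_val]
    exact h ν.val ν.property

theorem eOpPa_apply (μ : Fin m → Fin n) (f : PaV k A Λ ξ m) (κ : PaT A Λ ξ m) :
    eOpPa k A Λ ξ m μ f κ = if κ.val = μ then f κ else 0 := by
  simp only [eOpPa, LinearMap.pi_apply]
  split_ifs <;> rfl

theorem eOpPa_apply_eq_smul (ν : PaT A Λ ξ m) (f : PaV k A Λ ξ m) :
    eOpPa k A Λ ξ m ν.val f = f ν • pathVec k A Λ ξ ν.val := by
  funext κ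
  rw [eOpPa_apply, Pi.smul_apply, pathVec]
  split_ifs with h
  · rw [Subtype.ext h, smul_eq_mul, mul_one]
  · rw [smul_zero]

theorem eOpPa_pathVec (μ ν : Fin m → Fin n) :
    eOpPa k A Λ ξ m μ (pathVec k A Λ ξ ν) = if ν = μ then pathVec k A Λ ξ ν else 0 := by
  funext κ
  rw [eOpPa_apply]
  by_cases hν : κ.val = ν
  · subst hν
    split_ifs <;> rfl
  · simp [pathVec, hν, ite_apply]

theorem eOpPa_eq_zero {μ : Fin m → Fin n} (hμ : ¬FPath A Λ (List.ofFn μ) ξ) :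
    eOpPa k A Λ ξ m μ = 0 :=
  end_ext_pathVec fun ν hν => by
    rw [eOpPa_pathVec, if_neg (by rintro rfl; exact hμ hν), LinearMap.zero_apply]

theorem tOpPa_apply (j : ℕ) (h : j + 1 < m) (f : PaV k A Λ ξ m) (κ : PaT A Λ ξ m) :
    tOpPa k A Λ ξ m j h f κ =
      if hκ : FPath A Λ (List.ofFn (swapSeq j h κ.val)) ξ then f ⟨swapSeq j h κ.val, hκ⟩
      else 0 := by
  by_cases hκ : FPath A Λ (List.ofFn (swapSeq j h κ.val)) ξ
  · rw [dif_pos hκ]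
    exact LinearMap.congr_fun (dif_pos hκ) f
  · rw [dif_neg hκ]
    exact LinearMap.congr_fun (dif_neg hκ) f

theorem tOpPa_pathVec_of_fpath {ν : Fin m → Fin n} (hν : FPath A Λ (List.ofFn ν) ξ) (j : ℕ)
    (h : j + 1 < m) :
    tOpPa k A Λ ξ m j h (pathVec k A Λ ξ ν) = pathVec k A Λ ξ (swapSeq j h ν) := by
  funext κ
  have hκν : κ.val = swapSeq j h ν ↔ swapSeq j h κ.val = ν :=
    (swapSeq_involutive j h).eq_iff.symm
  rw [tOpPa_apply]
  by_cases hκ : FPath A Λ (List.ofFn (swapSeq j h κ.val)) ξ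
  · rw [dif_pos hκ]
    exact if_congr hκν.symm rfl rfl
  · rw [dif_neg hκ]
    exact (if_neg fun heq => hκ (by rwa [hκν.1 heq])).symm

theorem tOpPa_pathVec (hzero : ∀ i j, A i j = 0 → A j i = 0) {ν : Fin m → Fin n}
    (hν : FPath A Λ (List.ofFn ν) ξ) (j : ℕ) (h : j + 1 < m) :
    tOpPa k A Λ ξ m j h (pathVec k A Λ ξ ν) =
      if Swappable A j h ν then pathVec k A Λ ξ (swapSeq j h ν) else 0 := by
  rw [tOpPa_pathVec_of_fpath k hν]
  split_ifs with hj
  · rfl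
  · exact pathVec_eq_zero k fun hswap => hj ((hν.swapSeq_iff hzero j h).1 hswap)

theorem tOpPa_tOpPa_pathVec (hzero : ∀ i j, A i j = 0 → A j i = 0) {ν : Fin m → Fin n}
    (hν : FPath A Λ (List.ofFn ν) ξ) {i j : ℕ} (hi : i + 1 < m) (hj : j + 1 < m) :
    tOpPa k A Λ ξ m i hi (tOpPa k A Λ ξ m j hj (pathVec k A Λ ξ ν)) =
      if Swappable A j hj ν ∧ Swappable A i hi (swapSeq j hj ν) then
        pathVec k A Λ ξ (swapSeq i hi (swapSeq j hj ν)) else 0 := by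
  by_cases hsj : Swappable A j hj ν
  · rw [tOpPa_pathVec k hzero hν, if_pos hsj,
      tOpPa_pathVec k hzero ((hν.swapSeq_iff hzero j hj).2 hsj)]
    simp only [hsj, true_and]
  · rw [tOpPa_pathVec k hzero hν, if_neg hsj, map_zero, if_neg fun hs => hsj hs.1]

theorem tOpPa_tOpPa_tOpPa_pathVec (hzero : ∀ i j, A i j = 0 → A j i = 0) {ν : Fin m → Fin n}
    (hν : FPath A Λ (List.ofFn ν) ξ) {i j l : ℕ} (hi : i + 1 < m) (hj : j + 1 < m)
    (hl : l + 1 < m) :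
    tOpPa k A Λ ξ m i hi (tOpPa k A Λ ξ m j hj (tOpPa k A Λ ξ m l hl (pathVec k A Λ ξ ν))) =
      if Swappable A l hl ν ∧ Swappable A j hj (swapSeq l hl ν) ∧
          Swappable A i hi (swapSeq j hj (swapSeq l hl ν)) then
        pathVec k A Λ ξ (swapSeq i hi (swapSeq j hj (swapSeq l hl ν))) else 0 := by
  by_cases hsl : Swappable A l hl ν
  · rw [tOpPa_pathVec k hzero hν, if_pos hsl,
      tOpPa_tOpPa_pathVec k hzero ((hν.swapSeq_iff hzero l hl).2 hsl)]
    simp only [hsl, true_and]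
  · rw [tOpPa_pathVec k hzero hν, if_neg hsl, map_zero, map_zero, if_neg fun hs => hsl hs.1]

/-! ### The defining relations -/

theorem eOpPa_mul_self (μ : Fin m → Fin n) :
    eOpPa k A Λ ξ m μ * eOpPa k A Λ ξ m μ = eOpPa k A Λ ξ m μ :=
  end_ext_pathVec fun ν _ => by
    rw [Module.End.mul_apply, eOpPa_pathVec]
    split_ifs with h
    · rw [eOpPa_pathVec, if_pos h]
    · exact map_zero _

theorem eOpPa_mul_eOpPa_of_ne {μ μ' : Fin m → Fin n} (hne : μ ≠ μ') :
    eOpPa k A Λ ξ m μ * eOpPa k A Λ ξ m μ' = 0 :=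
  end_ext_pathVec fun ν _ => by
    rw [Module.End.mul_apply, eOpPa_pathVec, LinearMap.zero_apply]
    split_ifs with h
    · rw [eOpPa_pathVec, if_neg (h ▸ hne.symm)]
    · exact map_zero _

theorem sum_eOpPa : ∑ μ : Fin m → Fin n, eOpPa k A Λ ξ m μ = 1 :=
  end_ext_pathVec fun ν _ => by simp [LinearMap.sum_apply, eOpPa_pathVec]

theorem tOpPa_mul_eOpPa (j : ℕ) (h : j + 1 < m) (μ : Fin m → Fin n) :
    tOpPa k A Λ ξ m j h * eOpPa k A Λ ξ m μ =
      eOpPa k A Λ ξ m (swapSeq j h μ) * tOpPa k A Λ ξ m j h :=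
  end_ext_pathVec fun ν hν => by
    simp only [Module.End.mul_apply, tOpPa_pathVec_of_fpath k hν, eOpPa_pathVec,
      (swapSeq_involutive j h).injective.eq_iff]
    split_ifs
    · exact tOpPa_pathVec_of_fpath k hν j h
    · exact map_zero _

theorem tOpPa_comm (hzero : ∀ i j, A i j = 0 → A j i = 0) {i j : ℕ} (hi : i + 1 < m)
    (hj : j + 1 < m) (hij : i + 1 < j ∨ j + 1 < i) :
    tOpPa k A Λ ξ m i hi * tOpPa k A Λ ξ m j hj = tOpPa k A Λ ξ m j hj * tOpPa k A Λ ξ m i hi :=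
  end_ext_pathVec fun ν hν => by
    have hswap : Swappable A j hj (swapSeq i hi ν) ↔ Swappable A j hj ν :=
      swappable_swapSeq_iff ν hj hi hij.symm
    have hswap' : Swappable A i hi (swapSeq j hj ν) ↔ Swappable A i hi ν :=
      swappable_swapSeq_iff ν hi hj hij
    simp only [Module.End.mul_apply, tOpPa_tOpPa_pathVec k hzero hν, hswap, hswap',
      swapSeq_comm ν hi hj hij, and_comm]

theorem tOpPa_braid (hzero : ∀ i j, A i j = 0 → A j i = 0) (j : ℕ) (h₁ : j + 1 < m)
    (h₂ : j + 1 + 1 < m) :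
    tOpPa k A Λ ξ m (j + 1) h₂ * tOpPa k A Λ ξ m j h₁ * tOpPa k A Λ ξ m (j + 1) h₂ =
      tOpPa k A Λ ξ m j h₁ * tOpPa k A Λ ξ m (j + 1) h₂ * tOpPa k A Λ ξ m j h₁ :=
  end_ext_pathVec fun ν hν => by
    simp only [Module.End.mul_apply, tOpPa_tOpPa_tOpPa_pathVec k hzero hν, swapSeq_braid]
    refine if_congr ?_ rfl rfl
    have hne : j ≠ j + 1 + 1 ∧ j + 1 + 1 ≠ j := by omega
    simp only [Swappable, swapSeq_apply, hne, add_eq_left, left_eq_add,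
      one_ne_zero, if_true, if_false]
    tauto

theorem tOpPa_mul_self_mul_eOpPa (hzero : ∀ i j, A i j = 0 → A j i = 0) (j : ℕ) (h : j + 1 < m)
    (μ : Fin m → Fin n) :
    tOpPa k A Λ ξ m j h * tOpPa k A Λ ξ m j h * eOpPa k A Λ ξ m μ =
      if Swappable A j h μ then eOpPa k A Λ ξ m μ else 0 :=
  end_ext_pathVec fun ν hν => by
    rw [Module.End.mul_apply, eOpPa_pathVec]
    split_ifs with hνμ hs hs
    · subst hνμ
      have hs' : Swappable A j h (swapSeq j h ν) := by
        simpa [Swappable, swapSeq_apply] using hzero _ _ hs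
      rw [Module.End.mul_apply, tOpPa_tOpPa_pathVec k hzero hν, if_pos ⟨hs, hs'⟩,
        swapSeq_involutive j h ν, eOpPa_pathVec, if_pos rfl]
    · subst hνμ
      rw [Module.End.mul_apply, tOpPa_tOpPa_pathVec k hzero hν, if_neg fun hs' => hs hs'.1,
        LinearMap.zero_apply]
    · rw [map_zero, eOpPa_pathVec, if_neg hνμ]
    · rw [map_zero, LinearMap.zero_apply]

/-! ### The representation -/

variable (A Λ ξ) in
/-- The prescribed operator on `Sp(b)` of each generator of `R(β)`. -/
noncomputable def genOp : Gen n m → Module.End k (PaV k A Λ ξ m)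
  | .e μ => eOpPa k A Λ ξ m μ
  | .x _ => 0
  | .t j h => tOpPa k A Λ ξ m j h

variable (A Λ ξ m) in
/-- The action on `Sp(b)` of the free algebra on the generators of `R(β)`. -/
noncomputable def freeRep : FA k n m →ₐ[k] Module.End k (PaV k A Λ ξ m) :=
  FreeAlgebra.lift k (genOp k A Λ ξ)

theorem freeRep_Eg (μ : Fin m → Fin n) :
    freeRep k A Λ ξ m (Eg k μ) = eOpPa k A Λ ξ m μ :=
  FreeAlgebra.lift_ι_apply _ _

theorem freeRep_Xg (p : Fin m) : freeRep k A Λ ξ m (Xg k p) = 0 :=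
  FreeAlgebra.lift_ι_apply _ _

theorem freeRep_Tg (j : ℕ) (h : j + 1 < m) :
    freeRep k A Λ ξ m (Tg k j h) = tOpPa k A Λ ξ m j h :=
  FreeAlgebra.lift_ι_apply _ _

theorem eOpPa_eq_zero_of_apply_eq (hdiag : ∀ i, A i i = 2) (j : ℕ) (h : j + 1 < m)
    {μ : Fin m → Fin n} (hμ : μ ⟨j, Nat.lt_of_succ_lt h⟩ = μ ⟨j + 1, h⟩) :
    eOpPa k A Λ ξ m μ = 0 :=
  eOpPa_eq_zero k fun hpath => hpath.apply_ne_apply_succ hdiag j h hμ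

variable {d : Fin n → ℤ} {Q : Fin n → Fin n → MvPolynomial (Fin 2) k}

theorem freeRep_Tg_mul_Tg_mul_Eg (hdiag : ∀ i, A i i = 2) (hzero : ∀ i j, A i j = 0 → A j i = 0)
    (hd : ∀ i, d i ≠ 0) (hQ : QAdmissible k A d Q) (j : ℕ) (h : j + 1 < m) (μ : Fin m → Fin n) :
    freeRep k A Λ ξ m (Tg k j h * Tg k j h * Eg k μ) =
      freeRep k A Λ ξ m (eval2 k (Q (μ ⟨j, Nat.lt_of_succ_lt h⟩) (μ ⟨j + 1, h⟩))
        (Xg k ⟨j, Nat.lt_of_succ_lt h⟩) (Xg k ⟨j + 1, h⟩) * Eg k μ) := by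
  simp only [map_mul, map_eval2, freeRep_Eg, freeRep_Xg, freeRep_Tg, eval2_zero]
  by_cases hμ : μ ⟨j, Nat.lt_of_succ_lt h⟩ = μ ⟨j + 1, h⟩
  · rw [eOpPa_eq_zero_of_apply_eq k hdiag j h hμ, mul_zero, mul_zero]
  · rw [tOpPa_mul_self_mul_eOpPa k hzero, hQ.coeff_zero (hd _) hμ, Swappable]
    split_ifs
    · rw [map_one, one_mul]
    · rw [map_zero, zero_mul]

theorem freeRep_eval3_Qbar_mul_Eg (hdiag : ∀ i, A i i = 2) (hd : ∀ i, d i ≠ 0)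
    (hQ : QAdmissible k A d Q) (j : ℕ) (h : j + 2 < m) {μ : Fin m → Fin n}
    (hμ : μ ⟨j, by omega⟩ = μ ⟨j + 2, h⟩) (a b c : Fin m) :
    freeRep k A Λ ξ m (eval3 k (Qbar k (Q (μ ⟨j, by omega⟩) (μ ⟨j + 1, by omega⟩)))
      (Xg k a) (Xg k b) (Xg k c) * Eg k μ) = 0 := by
  simp only [map_mul, map_eval3, freeRep_Eg, freeRep_Xg, eval3_zero, coeff_zero_Qbar]
  by_cases hpath : FPath A Λ (List.ofFn μ) ξ
  · have hentry := hpath.entry_eq_neg_two hdiag h hμ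
    have hne := hpath.apply_ne_apply_succ hdiag j (by omega)
    rw [hQ.coeff_single_zero (hd _) hne (by omega), map_zero, zero_mul]
  · rw [eOpPa_eq_zero k hpath, mul_zero]

theorem freeRep_eq_of_rel (hdiag : ∀ i, A i i = 2) (hzero : ∀ i j, A i j = 0 → A j i = 0)
    (hd : ∀ i, d i ≠ 0) (hQ : QAdmissible k A d Q) {a b : FA k n m}
    (hab : Rel k Q (Iβ A Λ ξ m) a b) : freeRep k A Λ ξ m a = freeRep k A Λ ξ m b := by
  cases hab with
  | e_orth μ μ' hne => simp only [map_mul, map_zero, freeRep_Eg, eOpPa_mul_eOpPa_of_ne k hne]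
  | e_idem => simp only [map_mul, freeRep_Eg, eOpPa_mul_self]
  | e_sum => simp only [map_sum, map_one, freeRep_Eg, sum_eOpPa]
  | e_out μ hμ => rw [map_zero, freeRep_Eg, eOpPa_eq_zero k (mt FPath.mem_Iβ hμ)]
  | xx => simp only [map_mul, freeRep_Xg]
  | xe => simp only [map_mul, freeRep_Xg, zero_mul, mul_zero]
  | te => simp only [map_mul, freeRep_Eg, freeRep_Tg, tOpPa_mul_eOpPa]
  | tt i hi j hj hij => simp only [map_mul, freeRep_Tg, tOpPa_comm k hzero hi hj hij]
  | tsq j h μ => exact freeRep_Tg_mul_Tg_mul_Eg k hdiag hzero hd hQ j h μ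
  | tx_left j h μ hμ =>
    simp only [map_mul, map_sub, freeRep_Eg, eOpPa_eq_zero_of_apply_eq k hdiag j h hμ, mul_zero,
      sub_zero]
  | tx_right j h μ hμ =>
    simp only [map_mul, map_add, freeRep_Eg, eOpPa_eq_zero_of_apply_eq k hdiag j h hμ, mul_zero,
      add_zero]
  | tx_comm => simp only [map_mul, freeRep_Xg, zero_mul, mul_zero]
  | braid_ne => simp only [map_mul, freeRep_Tg, tOpPa_braid k hzero]
  | braid_eq j h₁ h₂ μ hμ =>
    rw [map_add, freeRep_eval3_Qbar_mul_Eg k hdiag hd hQ j h₂ hμ, add_zero]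
    simp only [map_mul, freeRep_Tg, tOpPa_braid k hzero]

theorem freeRep_Xg_pow_mul_Eg {p : Fin m} (hp : (p : ℕ) + 1 = m) (μ : Fin m → Fin n) :
    freeRep k A Λ ξ m (Xg k p ^ (Λ (μ p)).toNat * Eg k μ) = 0 := by
  rw [map_mul, map_pow, freeRep_Xg, freeRep_Eg]
  by_cases hpath : FPath A Λ (List.ofFn μ) ξ
  · rw [hpath.weight_last_eq_one hp, Int.toNat_one, pow_one, zero_mul]
  · rw [eOpPa_eq_zero k hpath, mul_zero]

/-! ### Simplicity -/

variable {k} {U : Submodule k (PaV k A Λ ξ m)}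

theorem exists_pathVec_mem (hE : ∀ μ, ∀ v ∈ U, eOpPa k A Λ ξ m μ v ∈ U) (hU : U ≠ ⊥) :
    ∃ ν, FPath A Λ (List.ofFn ν) ξ ∧ pathVec k A Λ ξ ν ∈ U := by
  obtain ⟨v, hv, hv0⟩ := U.ne_bot_iff.1 hU
  obtain ⟨ν, hν⟩ := Function.ne_iff.1 hv0
  refine ⟨ν.val, ν.property, (U.smul_mem_iff hν).1 ?_⟩
  rw [← eOpPa_apply_eq_smul]
  exact hE ν.val v hv

theorem pathVec_mem_of_reflTransGen (hzero : ∀ i j, A i j = 0 → A j i = 0)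
    (hT : ∀ j h, ∀ v ∈ U, tOpPa k A Λ ξ m j h v ∈ U) {ν κ : Fin m → Fin n}
    (hν : FPath A Λ (List.ofFn ν) ξ) (hνU : pathVec k A Λ ξ ν ∈ U)
    (hmoves : Relation.ReflTransGen (CommStep A) (List.ofFn ν) (List.ofFn κ)) :
    pathVec k A Λ ξ κ ∈ U := by
  suffices ∀ l, Relation.ReflTransGen (CommStep A) (List.ofFn ν) l → ∃ κ' : Fin m → Fin n,
      List.ofFn κ' = l ∧ FPath A Λ l ξ ∧ pathVec k A Λ ξ κ' ∈ U by
    obtain ⟨κ', heq, -, hmem⟩ := this _ hmoves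
    rwa [← List.ofFn_injective heq]
  intro l hl
  induction hl with
  | refl => exact ⟨ν, rfl, hν, hνU⟩
  | tail _ hstep ih =>
    obtain ⟨κ', rfl, hpath, hmem⟩ := ih
    obtain ⟨j, h, hswap⟩ := hstep.exists_swapSeq
    refine ⟨swapSeq j h κ', hswap, hstep.fpath hzero hpath, ?_⟩
    rw [← tOpPa_pathVec_of_fpath k hpath]
    exact hT j h _ hmem

theorem eq_top_of_pathVec_mem
    (hU : ∀ ν, FPath A Λ (List.ofFn ν) ξ → pathVec k A Λ ξ ν ∈ U) : U = ⊤ := by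
  rw [eq_top_iff, ← (Pi.basisFun k (PaT A Λ ξ m)).span_eq, Submodule.span_le]
  rintro _ ⟨ν, rfl⟩
  rw [← pathVec_val]
  exact hU ν.val ν.property

theorem eq_bot_or_eq_top_of_invariant (hdiag : ∀ i, A i i = 2)
    (hoff : ∀ i j, i ≠ j → A i j ≤ 0) (hzero : ∀ i j, A i j = 0 → A j i = 0)
    (hΛ : ∀ i, 0 ≤ Λ i) (hE : ∀ μ, ∀ v ∈ U, eOpPa k A Λ ξ m μ v ∈ U)
    (hT : ∀ j h, ∀ v ∈ U, tOpPa k A Λ ξ m j h v ∈ U) : U = ⊥ ∨ U = ⊤ := by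
  refine or_iff_not_imp_left.2 fun hU => eq_top_of_pathVec_mem fun κ hκ => ?_
  obtain ⟨ν, hν, hνU⟩ := exists_pathVec_mem hE hU
  have hmoves : Relation.ReflTransGen (CommStep A) (List.ofFn ν) (List.ofFn κ) :=
    hν.reflTransGen_commStep hdiag hoff hzero hΛ hκ (by simp)
  exact pathVec_mem_of_reflTransGen hzero hT hν hνU hmoves

end Operators

theorem sp_is_simple_homogeneous_module_ADE_general
    (A : Fin n → Fin n → ℤ) (d : Fin n → ℤ) (hdiag : ∀ i, A i i = 2)
    (hoff : ∀ i j, i ≠ j → A i j ≤ 0) (hzero : ∀ i j, A i j = 0 → A j i = 0)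
    (hd : ∀ i, d i ≠ 0) (Q : Fin n → Fin n → MvPolynomial (Fin 2) k)
    (hQ : QAdmissible k A d Q) (Λ : Fin n → ℤ) (hΛ : ∀ i, 0 ≤ Λ i) (ℓ : ℕ) (ξ : Fin n → ℤ)
    (hb : ∃ ν : Fin ℓ → Fin n, FPath A Λ (List.ofFn ν) ξ) :
    ∃ ρ : RingQuot (Rel k Q (Iβ A Λ ξ ℓ)) →ₐ[k] Module.End k (PaV k A Λ ξ ℓ),
      (∀ μ : Fin ℓ → Fin n, ρ (RingQuot.mkAlgHom k _ (Eg k μ)) = eOpPa k A Λ ξ ℓ μ) ∧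
      (∀ p : Fin ℓ, ρ (RingQuot.mkAlgHom k _ (Xg k p)) = 0) ∧
      (∀ (j : ℕ) (h : j + 1 < ℓ),
        ρ (RingQuot.mkAlgHom k _ (Tg k j h)) = tOpPa k A Λ ξ ℓ j h) ∧
      (∀ ν : Fin ℓ → Fin n, ν ∈ Iβ A Λ ξ ℓ → ∀ p : Fin ℓ, (p : ℕ) + 1 = ℓ →
        ρ (RingQuot.mkAlgHom k _ (Xg k p ^ (Λ (ν p)).toNat * Eg k ν)) = 0) ∧
      (∃ v : PaV k A Λ ξ ℓ, v ≠ 0) ∧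
      (∀ U : Submodule k (PaV k A Λ ξ ℓ),
        (∀ a v, v ∈ U → ρ a v ∈ U) → U = ⊥ ∨ U = ⊤) := by
  let ρ : RingQuot (Rel k Q (Iβ A Λ ξ ℓ)) →ₐ[k] Module.End k (PaV k A Λ ξ ℓ) :=
    RingQuot.liftAlgHom k
      ⟨freeRep k A Λ ξ ℓ, fun _ _ => freeRep_eq_of_rel k hdiag hzero hd hQ⟩
  have hρ : ∀ a, ρ (RingQuot.mkAlgHom k _ a) = freeRep k A Λ ξ ℓ a :=
    RingQuot.liftAlgHom_mkAlgHom_apply k _ _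
  have hρE : ∀ μ, ρ (RingQuot.mkAlgHom k _ (Eg k μ)) = eOpPa k A Λ ξ ℓ μ := fun μ =>
    (hρ _).trans (freeRep_Eg k μ)
  have hρT : ∀ j h, ρ (RingQuot.mkAlgHom k _ (Tg k j h)) = tOpPa k A Λ ξ ℓ j h := fun j h =>
    (hρ _).trans (freeRep_Tg k j h)
  obtain ⟨ν, hν⟩ := hb
  refine ⟨ρ, hρE, fun p => (hρ _).trans (freeRep_Xg k p), hρT,
    fun μ _ p hp => (hρ _).trans (freeRep_Xg_pow_mul_Eg k hp μ),
    ⟨_, pathVec_ne_zero k hν⟩, fun U hU => ?_⟩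
  exact eq_bot_or_eq_top_of_invariant hdiag hoff hzero hΛ
    (fun μ v hv => hρE μ ▸ hU _ v hv) fun j h v hv => hρT j h ▸ hU _ v hv

theorem sp_is_simple_homogeneous_module_ADE
    (A : Fin n → Fin n → ℤ)
    (hdiag : ∀ i, A i i = 2) (hsymm : ∀ i j, A i j = A j i)
    (hoff : ∀ i j, i ≠ j → A i j = 0 ∨ A i j = -1)
    (Q : Fin n → Fin n → MvPolynomial (Fin 2) k)
    (hQ : QAdmissible k A (fun _ => 1) Q)
    (i₀ : Fin n)
    (hmin : ∀ ξ ∈ orbitW A (Pi.single i₀ 1), ∀ j, ξ j = -1 ∨ ξ j = 0 ∨ ξ j = 1)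
    (hfin : (orbitW A (Pi.single i₀ 1)).Finite)
    (ℓ : ℕ) (ξ : Fin n → ℤ)
    (hb : ∃ ν : Fin ℓ → Fin n, FPath A (Pi.single i₀ 1) (List.ofFn ν) ξ) :
    ∃ ρ : RingQuot (Rel k Q (Iβ A (Pi.single i₀ 1) ξ ℓ)) →ₐ[k]
        Module.End k (PaV k A (Pi.single i₀ 1) ξ ℓ),
      -- the prescribed operators define an action of R(β)
      (∀ μ : Fin ℓ → Fin n,
        ρ (RingQuot.mkAlgHom k _ (Eg k μ)) = eOpPa k A (Pi.single i₀ 1) ξ ℓ μ) ∧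
      (∀ p : Fin ℓ, ρ (RingQuot.mkAlgHom k _ (Xg k p)) = 0) ∧
      (∀ (j : ℕ) (h : j + 1 < ℓ),
        ρ (RingQuot.mkAlgHom k _ (Tg k j h)) = tOpPa k A (Pi.single i₀ 1) ξ ℓ j h) ∧
      -- the generators of the cyclotomic ideal act by zero, so Sp(b) is a
      -- module over the cyclotomic quiver Hecke algebra R^{Λ_{i₀}}(ξ)
      (∀ (ν : Fin ℓ → Fin n), ν ∈ Iβ A (Pi.single i₀ 1) ξ ℓ →
        ∀ (p : Fin ℓ), (p : ℕ) + 1 = ℓ →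
        ρ (RingQuot.mkAlgHom k _ (Xg k p ^ ((Pi.single i₀ 1 : Fin n → ℤ) (ν p)).toNat * Eg k ν)) = 0) ∧
      -- Sp(b) is nonzero and has no nontrivial invariant subspace, i.e. it is simple
      (∃ v : PaV k A (Pi.single i₀ 1) ξ ℓ, v ≠ 0) ∧
      (∀ U : Submodule k (PaV k A (Pi.single i₀ 1) ξ ℓ),
        (∀ a v, v ∈ U → ρ a v ∈ U) → U = ⊥ ∨ U = ⊤) := by
  have hoff' : ∀ i j, i ≠ j → A i j ≤ 0 := fun i j hij => by
    rcases hoff i j hij with h | h <;> simp [h]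
  have hΛ : 0 ≤ (Pi.single i₀ 1 : Fin n → ℤ) := Pi.single_nonneg.2 zero_le_one
  exact sp_is_simple_homogeneous_module_ADE_general k A (fun _ => 1) hdiag hoff'
    (fun i j h => hsymm i j ▸ h) (fun _ => one_ne_zero) Q hQ _ hΛ ℓ ξ hb

end QHA
end
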